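/- For every T > 0, ∫_0^T E₁(T−t) F(t) dt = 1. Consequently, for every α > 0 the kernels k_α(x,y) = F((x−y)/α) and k'_α(x,y) = (1/α) E₁((x−y)/α) on Ω = {(x,y) ∈ [0,1]² : x > y} satisfy, with weight ω ≡ 1, δ_{k_α,k'_α}(x,y) = δ_{k'_α,k_α}(x,y) = 1 for all (x,y) ∈ Ω, i.e. k_α and k'_α are conjugate. -/

import Mathlib

open MeasureTheory Set

noncomputable section

/-- the exponential integral function `E₁(x) = ∫_x^∞ e^{−t}/t dt`. -/
def E1 (x : ℝ) : ℝ := ∫ t in Ioi x, Real.exp (-t) / t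

/-- `F(t) = (∫_0^∞ t^{s−1}/Γ(s) ds) e^{−t}`. -/
def Ffun (t : ℝ) : ℝ := (∫ s in Ioi (0:ℝ), t ^ (s - 1) / Real.Gamma s) * Real.exp (-t)
/-- `δ_{k₁,k₂}(x,y) = ∫_y^x k₁(x,z) k₂(z,y) ω(z) dz` with weight `ω ≡ 1`. -/
def deltaK (k₁ k₂ : ℝ → ℝ → ℝ) (x y : ℝ) : ℝ :=
  ∫ z in y..x, k₁ x z * k₂ z y

/-!
The laws `γ_a = gammaMeasure a 1` form a convolution semigroup (the gamma subordinator), `F` is the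
density of its potential measure `U = ∫_0^∞ γ_a da`, and `E₁` is the tail of its Lévy measure
`e^{-v}/v dv`. Since `γ_{a+r} = γ_a ∗ γ_r`, integrating
`γ_a(-∞, T] - γ_{a+r}(-∞, T] = ∫ γ_r(T-t, ∞) γ_a(dt)` over `a > 0` telescopes to
`∫ γ_r(T-t, ∞) U(dt) = ∫_0^r γ_a(-∞, T] da`. Multiply by `Γ(r)` and let `r → 0⁺`: on the left
`Γ(r) γ_r(u, ∞)` is the incomplete gamma function `Γ(r, u)`, which tends to `Γ(0, u) = E₁(u)`, and
the right side tends to `1`. Fatou's lemma gives one inequality in the limit; the bound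
`Γ(r, u) ≤ Γ(0, u) + r`, from Bernoulli's inequality, gives the other.
-/

section

open Filter ProbabilityTheory
open scoped ENNReal Topology

lemma lintegral_Ioi_comp_add_right (f : ℝ → ℝ≥0∞) (a r : ℝ) :
    ∫⁻ s in Ioi a, f (s + r) = ∫⁻ s in Ioi (a + r), f s := by
  have h := (measurePreserving_add_right volume r).setLIntegral_comp_preimage_emb
    (measurableEmbedding_addRight r) f (Ioi (a + r))
  rwa [preimage_add_const_Ioi, add_sub_cancel_right] at h

lemma lintegral_eq_ofReal_mul_lintegral_comp_mul_left {f : ℝ → ℝ≥0∞} (hf : Measurable f)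
    {w : ℝ} (hw : 0 < w) : ∫⁻ t, f t = ENNReal.ofReal w * ∫⁻ x, f (w * x) := by
  conv_lhs => rw [← Real.smul_map_volume_mul_left hw.ne']
  rw [lintegral_smul_measure, lintegral_map hf (measurable_const_mul w), abs_of_pos hw, smul_eq_mul]

lemma conv_Iic_eq_setLIntegral (μ ν : Measure ℝ) [SFinite ν] (hν : ν (Iio 0) = 0) (T : ℝ) :
    (μ ∗ ν) (Iic T) = ∫⁻ x in Iic T, ν (Iic (T - x)) ∂μ := by
  have hfiber (x : ℝ) : ∫⁻ y, (Iic T).indicator 1 (x + y) ∂ν = ν (Iic (T - x)) := by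
    rw [← lintegral_indicator_one measurableSet_Iic]
    simp only [indicator_apply, mem_Iic, le_sub_iff_add_le', Pi.one_apply]
  have hzero (x : ℝ) (hx : T < x) : ν (Iic (T - x)) = 0 :=
    measure_mono_null (fun y (hy : y ≤ T - x) => show y < 0 by linarith) hν
  rw [← lintegral_indicator_one measurableSet_Iic,
    Measure.lintegral_conv (measurable_one.indicator measurableSet_Iic),
    ← lintegral_indicator measurableSet_Iic]
  refine lintegral_congr fun x => ?_
  rw [hfiber]
  rcases le_or_gt x T with hx | hx
  · rw [indicator_of_mem (mem_Iic.2 hx)]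
  · rw [indicator_of_notMem (notMem_Iic.2 hx), hzero x hx]

lemma conv_Iic_add_setLIntegral_Ioi (μ ν : Measure ℝ) [IsProbabilityMeasure ν]
    (hν : ν (Iio 0) = 0) (T : ℝ) :
    (μ ∗ ν) (Iic T) + ∫⁻ x in Iic T, ν (Ioi (T - x)) ∂μ = μ (Iic T) := by
  have hIic : Measurable fun x => ν (Iic (T - x)) :=
    Antitone.measurable fun x y hxy => measure_mono (Iic_subset_Iic.2 (by linarith))
  have hsplit (x : ℝ) : ν (Iic (T - x)) + ν (Ioi (T - x)) = 1 := by
    rw [← compl_Iic, prob_add_prob_compl measurableSet_Iic]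
  rw [conv_Iic_eq_setLIntegral μ ν hν, ← lintegral_add_left hIic]
  simp only [hsplit, setLIntegral_one]

lemma measurable_realGamma : Measurable Real.Gamma := by
  have hinv : Continuous fun s : ℝ => (Real.Gamma s)⁻¹ := by
    have h := Complex.continuous_re.comp
      (Complex.differentiable_one_div_Gamma.continuous.comp Complex.continuous_ofReal)
    simpa [Function.comp_def, Complex.Gamma_ofReal, ← Complex.ofReal_inv] using h
  simpa only [Pi.inv_def, inv_inv] using hinv.measurable.inv

lemma measurable_uncurry_gammaPDF (b : ℝ) : Measurable fun p : ℝ × ℝ => gammaPDF p.1 b p.2 := by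
  have hΓ : Measurable fun p : ℝ × ℝ => Real.Gamma p.1 := measurable_realGamma.comp measurable_fst
  exact (Measurable.ite (measurableSet_Ici.preimage measurable_snd) (by fun_prop)
    measurable_const).ennreal_ofReal

lemma measurable_gammaPDF (a b : ℝ) : Measurable (gammaPDF a b) :=
  (measurable_gammaPDFReal a b).ennreal_ofReal

lemma gammaPDF_mul_gammaPDF_eq_mul_betaPDF {a a' b w x : ℝ} (ha : 0 < a) (ha' : 0 < a')
    (hb : 0 < b) (hw : 0 < w) (hx₀ : x ≠ 0) (hx₁ : x ≠ 1) :
    ENNReal.ofReal w * (gammaPDF a b (w * x) * gammaPDF a' b (w * (1 - x))) =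
      gammaPDF (a + a') b w * betaPDF a a' x := by
  rcases hx₀.lt_or_gt with hx | hx
  · rw [gammaPDF_of_neg (mul_neg_of_pos_of_neg hw hx), betaPDF_eq_zero_of_nonpos hx.le]
    simp only [zero_mul, mul_zero]
  rcases hx₁.lt_or_gt with hx' | hx'
  swap
  · rw [gammaPDF_of_neg (x := w * (1 - x)) (mul_neg_of_pos_of_neg hw (sub_neg.2 hx')),
      betaPDF_eq_zero_of_one_le hx'.le]
    simp only [mul_zero]
  have hy : 0 < 1 - x := sub_pos.2 hx'
  have hpow : w ^ (a + a' - 1) = w * (w ^ (a - 1) * w ^ (a' - 1)) := by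
    rw [← Real.rpow_add hw, mul_comm, ← Real.rpow_add_one hw.ne']
    ring_nf
  have hexp : Real.exp (-(b * w)) =
      Real.exp (-(b * (w * x))) * Real.exp (-(b * (w * (1 - x)))) := by
    rw [← Real.exp_add]
    ring_nf
  rw [gammaPDF_of_nonneg (by positivity), gammaPDF_of_nonneg (by positivity),
    gammaPDF_of_nonneg hw.le, betaPDF_of_pos_lt_one hx hx',
    ← ENNReal.ofReal_mul (by positivity), ← ENNReal.ofReal_mul hw.le,
    ← ENNReal.ofReal_mul (by positivity), Real.mul_rpow hw.le hx.le, Real.mul_rpow hw.le hy.le,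
    Real.rpow_add hb, hpow, hexp, beta]
  congr 1
  field_simp

lemma gammaPDF_lconvolution_gammaPDF {a a' b w : ℝ} (ha : 0 < a) (ha' : 0 < a')
    (hb : 0 < b) (hw : w ≠ 0) :
    (gammaPDF a b ⋆ₗ gammaPDF a' b) w = gammaPDF (a + a') b w := by
  rw [lconvolution_def]
  rcases hw.lt_or_gt with hw | hw
  · rw [gammaPDF_of_neg hw]
    refine lintegral_eq_zero_of_ae_eq_zero (ae_of_all _ fun t => ?_)
    rcases lt_or_ge t 0 with ht | ht
    · simp [gammaPDF_of_neg ht]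
    · simp [gammaPDF_of_neg (show -t + w < 0 by linarith)]
  have hmeas : Measurable fun t => gammaPDF a b t * gammaPDF a' b (-t + w) :=
    (measurable_gammaPDF a b).mul ((measurable_gammaPDF a' b).comp (by fun_prop))
  calc ∫⁻ t, gammaPDF a b t * gammaPDF a' b (-t + w)
      = ENNReal.ofReal w * ∫⁻ x, gammaPDF a b (w * x) * gammaPDF a' b (w * (1 - x)) := by
        rw [lintegral_eq_ofReal_mul_lintegral_comp_mul_left hmeas hw]
        simp only [show ∀ x, -(w * x) + w = w * (1 - x) from fun x => by ring]
    _ = ∫⁻ x, gammaPDF (a + a') b w * betaPDF a a' x := by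
        rw [← lintegral_const_mul' _ _ ENNReal.ofReal_ne_top]
        refine lintegral_congr_ae ?_
        filter_upwards [Measure.ae_ne volume 0, Measure.ae_ne volume 1] with x hx₀ hx₁
        exact gammaPDF_mul_gammaPDF_eq_mul_betaPDF ha ha' hb hw hx₀ hx₁
    _ = gammaPDF (a + a') b w := by
        rw [lintegral_const_mul' _ _ (show gammaPDF (a + a') b w ≠ ∞ from ENNReal.ofReal_ne_top),
          lintegral_betaPDF_eq_one ha ha', mul_one]

lemma gammaMeasure_conv_gammaMeasure {a a' b : ℝ} (ha : 0 < a) (ha' : 0 < a') (hb : 0 < b) :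
    gammaMeasure a b ∗ gammaMeasure a' b = gammaMeasure (a + a') b := by
  rw [gammaMeasure, gammaMeasure, conv_withDensity_eq_lconvolution (measurable_gammaPDF a b)
    (measurable_gammaPDF a' b), gammaMeasure]
  refine withDensity_congr_ae ?_
  filter_upwards [Measure.ae_ne volume 0] with w hw
  exact gammaPDF_lconvolution_gammaPDF ha ha' hb hw

lemma gammaMeasure_Iio_zero (a b : ℝ) : gammaMeasure a b (Iio 0) = 0 := by
  rw [gammaMeasure, withDensity_apply _ measurableSet_Iio, lintegral_gammaPDF_of_nonpos le_rfl]

lemma measurable_gammaMeasure_apply (b : ℝ) {S : Set ℝ} (hS : MeasurableSet S) :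
    Measurable fun a => gammaMeasure a b S := by
  simp only [gammaMeasure, withDensity_apply _ hS]
  exact (measurable_uncurry_gammaPDF b).lintegral_prod_right'

lemma gammaMeasure_Iic_add {a r b : ℝ} (ha : 0 < a) (hr : 0 < r) (hb : 0 < b) (T : ℝ) :
    gammaMeasure (a + r) b (Iic T) +
      ∫⁻ t in Iic T, gammaMeasure r b (Ioi (T - t)) ∂gammaMeasure a b =
      gammaMeasure a b (Iic T) := by
  have := isProbabilityMeasure_gammaMeasure hr hb
  rw [← gammaMeasure_conv_gammaMeasure ha hr hb]
  exact conv_Iic_add_setLIntegral_Ioi _ _ (gammaMeasure_Iio_zero r b) T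

lemma antitoneOn_gammaMeasure_Iic {b : ℝ} (hb : 0 < b) (T : ℝ) :
    AntitoneOn (fun a => gammaMeasure a b (Iic T)) (Ioi 0) := by
  intro a ha a' _ haa'
  rcases haa'.eq_or_lt with rfl | hlt
  · rfl
  · have h := gammaMeasure_Iic_add ha (sub_pos.2 hlt) hb T
    rw [add_sub_cancel] at h
    exact le_self_add.trans_eq h

lemma gammaPDF_le_mul_gammaPDF_two_mul {a b t T : ℝ} (ha : 0 < a) (hb : 0 < b) (ht : t ≤ T) :
    gammaPDF a b t ≤ ENNReal.ofReal (Real.exp (b * T) * 2 ^ (-a)) * gammaPDF a (2 * b) t := by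
  rcases lt_or_ge t 0 with hneg | hnonneg
  · rw [gammaPDF_of_neg hneg]
    exact zero_le
  have hexp : Real.exp (-(b * t)) ≤ Real.exp (b * T) * Real.exp (-(2 * b * t)) := by
    rw [← Real.exp_add, Real.exp_le_exp]
    nlinarith
  rw [gammaPDF_of_nonneg hnonneg, gammaPDF_of_nonneg hnonneg,
    ← ENNReal.ofReal_mul (by positivity)]
  refine ENNReal.ofReal_le_ofReal ?_
  calc b ^ a / Real.Gamma a * t ^ (a - 1) * Real.exp (-(b * t))
      ≤ b ^ a / Real.Gamma a * t ^ (a - 1) * (Real.exp (b * T) * Real.exp (-(2 * b * t))) := by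
        gcongr
    _ = Real.exp (b * T) * 2 ^ (-a) *
          ((2 * b) ^ a / Real.Gamma a * t ^ (a - 1) * Real.exp (-(2 * b * t))) := by
        rw [Real.mul_rpow two_pos.le hb.le, Real.rpow_neg two_pos.le]
        field_simp

lemma gammaMeasure_Iic_le {a b : ℝ} (ha : 0 < a) (hb : 0 < b) (T : ℝ) :
    gammaMeasure a b (Iic T) ≤ ENNReal.ofReal (Real.exp (b * T) * 2 ^ (-a)) := by
  rw [gammaMeasure, withDensity_apply _ measurableSet_Iic]
  calc ∫⁻ t in Iic T, gammaPDF a b t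
      ≤ ∫⁻ t in Iic T, ENNReal.ofReal (Real.exp (b * T) * 2 ^ (-a)) * gammaPDF a (2 * b) t :=
        setLIntegral_mono' measurableSet_Iic fun t ht =>
          gammaPDF_le_mul_gammaPDF_two_mul ha hb ht
    _ ≤ ∫⁻ t, ENNReal.ofReal (Real.exp (b * T) * 2 ^ (-a)) * gammaPDF a (2 * b) t :=
        setLIntegral_le_lintegral _ _
    _ = ENNReal.ofReal (Real.exp (b * T) * 2 ^ (-a)) := by
        rw [lintegral_const_mul' _ _ ENNReal.ofReal_ne_top,
          lintegral_gammaPDF_eq_one ha (by positivity), mul_one]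

/-- The density of the potential measure of the gamma subordinator of rate `b`, whose value at
time `a` has law `gammaMeasure a b`. For `b = 1` it is `F` on `(0, ∞)`. -/
def gammaPotentialDensity (b t : ℝ) : ℝ≥0∞ := ∫⁻ a in Ioi 0, gammaPDF a b t

/-- The potential (expected occupation) measure `∫_0^∞ gammaMeasure a b da` of the gamma
subordinator of rate `b`, given by its density. -/
def gammaPotential (b : ℝ) : Measure ℝ := volume.withDensity (gammaPotentialDensity b)

lemma measurable_gammaPotentialDensity (b : ℝ) : Measurable (gammaPotentialDensity b) :=
  (measurable_uncurry_gammaPDF b).lintegral_prod_left'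

lemma setLIntegral_gammaPotential (b : ℝ) {f : ℝ → ℝ≥0∞} (hf : Measurable f) {S : Set ℝ}
    (hS : MeasurableSet S) :
    ∫⁻ t in S, f t ∂gammaPotential b = ∫⁻ a in Ioi 0, ∫⁻ t in S, f t ∂gammaMeasure a b := by
  have hmeas : Measurable fun p : ℝ × ℝ => gammaPDF p.2 b p.1 * f p.1 :=
    ((measurable_uncurry_gammaPDF b).comp measurable_swap).mul (hf.comp measurable_fst)
  simp only [gammaPotential, gammaMeasure]
  rw [setLIntegral_withDensity_eq_setLIntegral_mul _ (measurable_gammaPotentialDensity b) hf hS]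
  simp only [setLIntegral_withDensity_eq_setLIntegral_mul _ (measurable_gammaPDF _ b) hf hS,
    Pi.mul_apply]
  rw [← lintegral_lintegral_swap hmeas.aemeasurable]
  refine lintegral_congr fun t => ?_
  exact (lintegral_mul_const _ ((measurable_uncurry_gammaPDF b).comp measurable_prodMk_right)).symm

lemma gammaPotential_apply (b : ℝ) {S : Set ℝ} (hS : MeasurableSet S) :
    gammaPotential b S = ∫⁻ a in Ioi 0, gammaMeasure a b S := by
  simpa only [Pi.one_apply, setLIntegral_one] using setLIntegral_gammaPotential b measurable_one hS

lemma gammaPotential_Iic_zero (b : ℝ) : gammaPotential b (Iic 0) = 0 := by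
  have hIio : gammaPotential b (Iio 0) = 0 := by
    simp only [gammaPotential_apply b measurableSet_Iio, gammaMeasure_Iio_zero, lintegral_zero]
  have hac : gammaPotential b ≪ volume := withDensity_absolutelyContinuous _ _
  rwa [← measure_congr (hac.ae_eq Iio_ae_eq_Iic)]

lemma gammaPotential_Iic_lt_top {b : ℝ} (hb : 0 < b) (T : ℝ) : gammaPotential b (Iic T) < ∞ := by
  have hint : IntegrableOn (fun a : ℝ => Real.exp (b * T) * 2 ^ (-a)) (Ioi 0) := by
    simpa only [IntegrableOn, Real.rpow_def_of_pos two_pos, mul_neg, neg_mul] using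
      (exp_neg_integrableOn_Ioi 0 (Real.log_pos one_lt_two)).const_mul (Real.exp (b * T))
  rw [gammaPotential_apply b measurableSet_Iic]
  exact (setLIntegral_mono' measurableSet_Ioi fun a ha => gammaMeasure_Iic_le ha hb T).trans_lt
    hint.lintegral_lt_top

lemma setLIntegral_gammaMeasure_Ioi_gammaPotential {r b : ℝ} (hr : 0 < r) (hb : 0 < b) (T : ℝ) :
    ∫⁻ t in Iic T, gammaMeasure r b (Ioi (T - t)) ∂gammaPotential b =
      ∫⁻ a in Ioc 0 r, gammaMeasure a b (Iic T) := by
  have htail : Measurable fun t => gammaMeasure r b (Ioi (T - t)) :=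
    Monotone.measurable fun t t' htt' => measure_mono (Ioi_subset_Ioi (by linarith))
  have hcdf : Measurable fun a => gammaMeasure (a + r) b (Iic T) :=
    (measurable_gammaMeasure_apply b measurableSet_Iic).comp (measurable_add_const r)
  have hfinite : ∫⁻ a in Ioi r, gammaMeasure a b (Iic T) ≠ ∞ := by
    refine ne_top_of_le_ne_top (gammaPotential_Iic_lt_top hb T).ne ?_
    rw [gammaPotential_apply b measurableSet_Iic]
    exact lintegral_mono_set (Ioi_subset_Ioi hr.le)
  refine (ENNReal.add_right_inj hfinite).1 ?_
  calc (∫⁻ a in Ioi r, gammaMeasure a b (Iic T)) +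
        ∫⁻ t in Iic T, gammaMeasure r b (Ioi (T - t)) ∂gammaPotential b
      = ∫⁻ a in Ioi 0, (gammaMeasure (a + r) b (Iic T) +
          ∫⁻ t in Iic T, gammaMeasure r b (Ioi (T - t)) ∂gammaMeasure a b) := by
        rw [lintegral_add_left hcdf,
          lintegral_Ioi_comp_add_right (fun a => gammaMeasure a b (Iic T)), zero_add,
          setLIntegral_gammaPotential b htail measurableSet_Iic]
    _ = ∫⁻ a in Ioi 0, gammaMeasure a b (Iic T) :=
        setLIntegral_congr_fun measurableSet_Ioi fun a ha => gammaMeasure_Iic_add ha hr hb T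
    _ = (∫⁻ a in Ioi r, gammaMeasure a b (Iic T)) +
          ∫⁻ a in Ioc 0 r, gammaMeasure a b (Iic T) := by
        rw [← Ioc_union_Ioi_eq_Ioi hr.le,
          lintegral_union measurableSet_Ioi (Ioc_disjoint_Ioi le_rfl), add_comm]

/-- The upper incomplete gamma function `Γ(s, x) = ∫_x^∞ v^{s-1} e^{-v} dv`, valued in `ℝ≥0∞` so
that it makes sense for every `s`, in particular for `Γ(0, x) = E₁(x)`. -/
def upperIncompleteGamma (s x : ℝ) : ℝ≥0∞ :=
  ∫⁻ v in Ioi x, ENNReal.ofReal (v ^ (s - 1) * Real.exp (-v))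

lemma measurable_upperIncompleteGamma (s : ℝ) : Measurable (upperIncompleteGamma s) :=
  Antitone.measurable fun _ _ hxy => lintegral_mono_set (Ioi_subset_Ioi hxy)

lemma measurable_upperIncompleteGamma_const_sub (s T : ℝ) :
    Measurable fun t => upperIncompleteGamma s (T - t) :=
  (measurable_upperIncompleteGamma s).comp (measurable_const.sub measurable_id)

lemma ofReal_Gamma_mul_gammaMeasure_Ioi {r x : ℝ} (hr : 0 < r) (hx : 0 ≤ x) :
    ENNReal.ofReal (Real.Gamma r) * gammaMeasure r 1 (Ioi x) = upperIncompleteGamma r x := by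
  have hΓ := Real.Gamma_pos_of_pos hr
  rw [gammaMeasure, withDensity_apply _ measurableSet_Ioi,
    ← lintegral_const_mul' _ _ ENNReal.ofReal_ne_top]
  refine setLIntegral_congr_fun measurableSet_Ioi fun v hv => ?_
  simp only [gammaPDF_of_nonneg (hx.trans (mem_Ioi.1 hv).le), ← ENNReal.ofReal_mul hΓ.le,
    Real.one_rpow, one_mul]
  congr 1
  field_simp

lemma upperIncompleteGamma_one_le_one {x : ℝ} (hx : 0 ≤ x) : upperIncompleteGamma 1 x ≤ 1 := by
  have := isProbabilityMeasure_gammaMeasure one_pos one_pos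
  rw [← ofReal_Gamma_mul_gammaMeasure_Ioi one_pos hx, Real.Gamma_one, ENNReal.ofReal_one, one_mul]
  exact prob_le_one

lemma rpow_sub_one_le_inv_add {r v : ℝ} (hr₀ : 0 ≤ r) (hr₁ : r ≤ 1) (hv : 0 < v) :
    v ^ (r - 1) ≤ v⁻¹ + r := by
  have hbernoulli : v ^ r ≤ 1 + r * (v - 1) := by
    simpa using rpow_one_add_le_one_add_mul_self (s := v - 1) (by linarith) hr₀ hr₁
  rw [Real.rpow_sub_one hv.ne', div_le_iff₀ hv, add_mul, inv_mul_cancel₀ hv.ne']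
  linarith

lemma upperIncompleteGamma_le_zero_add {r x : ℝ} (hr₀ : 0 ≤ r) (hr₁ : r ≤ 1) (hx : 0 ≤ x) :
    upperIncompleteGamma r x ≤ upperIncompleteGamma 0 x + ENNReal.ofReal r := by
  calc upperIncompleteGamma r x
      ≤ ∫⁻ v in Ioi x, (ENNReal.ofReal (v ^ ((0 : ℝ) - 1) * Real.exp (-v)) +
          ENNReal.ofReal r * ENNReal.ofReal (v ^ ((1 : ℝ) - 1) * Real.exp (-v))) := by
        refine setLIntegral_mono' measurableSet_Ioi fun v hv => ?_
        have hv₀ : 0 < v := hx.trans_lt hv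
        rw [← ENNReal.ofReal_mul hr₀, ← ENNReal.ofReal_add (by positivity) (by positivity)]
        refine ENNReal.ofReal_le_ofReal ?_
        rw [zero_sub, Real.rpow_neg_one, sub_self, Real.rpow_zero, one_mul, ← add_mul]
        gcongr
        exact rpow_sub_one_le_inv_add hr₀ hr₁ hv₀
    _ = upperIncompleteGamma 0 x + ENNReal.ofReal r * upperIncompleteGamma 1 x := by
        rw [lintegral_add_left (by fun_prop), lintegral_const_mul' _ _ ENNReal.ofReal_ne_top,
          upperIncompleteGamma, upperIncompleteGamma]
    _ ≤ upperIncompleteGamma 0 x + ENNReal.ofReal r := by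
        gcongr
        exact mul_le_of_le_one_right' (upperIncompleteGamma_one_le_one hx)

lemma upperIncompleteGamma_zero_lt_top {x : ℝ} (hx : 0 < x) : upperIncompleteGamma 0 x < ∞ := by
  calc upperIncompleteGamma 0 x
      ≤ ∫⁻ v in Ioi x, ENNReal.ofReal x⁻¹ *
          ENNReal.ofReal (v ^ ((1 : ℝ) - 1) * Real.exp (-v)) := by
        refine setLIntegral_mono' measurableSet_Ioi fun v hv => ?_
        rw [← ENNReal.ofReal_mul (by positivity), zero_sub, Real.rpow_neg_one, sub_self,
          Real.rpow_zero, one_mul]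
        gcongr
        exact (mem_Ioi.1 hv).le
    _ = ENNReal.ofReal x⁻¹ * upperIncompleteGamma 1 x :=
        lintegral_const_mul' _ _ ENNReal.ofReal_ne_top
    _ < ∞ := ENNReal.mul_lt_top ENNReal.ofReal_lt_top
        ((upperIncompleteGamma_one_le_one hx.le).trans_lt ENNReal.one_lt_top)

lemma upperIncompleteGamma_le_liminf {x : ℝ} (hx : 0 ≤ x) (s : ℝ) :
    upperIncompleteGamma s x ≤ liminf (fun r => upperIncompleteGamma r x) (𝓝[>] s) := by
  have hlim (v : ℝ) (hv : v ∈ Ioi x) :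
      liminf (fun r => ENNReal.ofReal (v ^ (r - 1) * Real.exp (-v))) (𝓝[>] s) =
        ENNReal.ofReal (v ^ (s - 1) * Real.exp (-v)) := by
    have hv₀ : v ≠ 0 := (hx.trans_lt hv).ne'
    have hcont : Continuous fun r : ℝ => ENNReal.ofReal (v ^ (r - 1) * Real.exp (-v)) :=
      ENNReal.continuous_ofReal.comp
        ((continuous_const.rpow (by fun_prop) fun _ => Or.inl hv₀).mul continuous_const)
    exact ((hcont.tendsto s).mono_left nhdsWithin_le_nhds).liminf_eq
  rw [upperIncompleteGamma, ← setLIntegral_congr_fun measurableSet_Ioi hlim]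
  exact lintegral_liminf_le fun r => by fun_prop

lemma setLIntegral_upperIncompleteGamma_gammaPotential {r : ℝ} (hr : 0 < r) (T : ℝ) :
    ∫⁻ t in Iic T, upperIncompleteGamma r (T - t) ∂gammaPotential 1 =
      ENNReal.ofReal (Real.Gamma r) * ∫⁻ a in Ioc 0 r, gammaMeasure a 1 (Iic T) := by
  rw [← setLIntegral_gammaMeasure_Ioi_gammaPotential hr one_pos,
    ← lintegral_const_mul' _ _ ENNReal.ofReal_ne_top]
  exact setLIntegral_congr_fun measurableSet_Iic fun t ht =>
    (ofReal_Gamma_mul_gammaMeasure_Ioi hr (sub_nonneg.2 ht)).symm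

lemma ofReal_Gamma_add_one {r : ℝ} (hr : 0 < r) :
    ENNReal.ofReal (Real.Gamma (r + 1)) = ENNReal.ofReal (Real.Gamma r) * ENNReal.ofReal r := by
  rw [← ENNReal.ofReal_mul (Real.Gamma_pos_of_pos hr).le, Real.Gamma_add_one hr.ne', mul_comm]

lemma setLIntegral_upperIncompleteGamma_gammaPotential_le {r : ℝ} (hr : 0 < r) (T : ℝ) :
    ∫⁻ t in Iic T, upperIncompleteGamma r (T - t) ∂gammaPotential 1 ≤
      ENNReal.ofReal (Real.Gamma (r + 1)) := by
  rw [setLIntegral_upperIncompleteGamma_gammaPotential hr, ofReal_Gamma_add_one hr]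
  gcongr
  calc ∫⁻ a in Ioc 0 r, gammaMeasure a 1 (Iic T)
      ≤ ∫⁻ _ in Ioc 0 r, 1 := setLIntegral_mono' measurableSet_Ioc fun a ha =>
        have := isProbabilityMeasure_gammaMeasure ha.1 one_pos
        prob_le_one
    _ = ENNReal.ofReal r := by rw [setLIntegral_one, Real.volume_Ioc, sub_zero]

lemma ofReal_Gamma_add_one_le_setLIntegral_add {r T : ℝ} (hr : 0 < r) (hT : 0 ≤ T) :
    ENNReal.ofReal (Real.Gamma (r + 1)) ≤
      (∫⁻ t in Iic T, upperIncompleteGamma r (T - t) ∂gammaPotential 1) +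
        ENNReal.ofReal r * upperIncompleteGamma r T := by
  have := isProbabilityMeasure_gammaMeasure hr one_pos
  have hcdf : ENNReal.ofReal r * gammaMeasure r 1 (Iic T) ≤
      ∫⁻ a in Ioc 0 r, gammaMeasure a 1 (Iic T) := by
    calc ENNReal.ofReal r * gammaMeasure r 1 (Iic T)
        = ∫⁻ _ in Ioc 0 r, gammaMeasure r 1 (Iic T) := by
          rw [setLIntegral_const, Real.volume_Ioc, sub_zero, mul_comm]
      _ ≤ ∫⁻ a in Ioc 0 r, gammaMeasure a 1 (Iic T) :=
          setLIntegral_mono' measurableSet_Ioc fun a ha =>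
            antitoneOn_gammaMeasure_Iic one_pos T ha.1 hr ha.2
  calc ENNReal.ofReal (Real.Gamma (r + 1))
      = ENNReal.ofReal (Real.Gamma r) * ENNReal.ofReal r *
          (gammaMeasure r 1 (Iic T) + gammaMeasure r 1 (Ioi T)) := by
        rw [← compl_Iic, prob_add_prob_compl measurableSet_Iic, mul_one, ofReal_Gamma_add_one hr]
    _ = ENNReal.ofReal (Real.Gamma r) * (ENNReal.ofReal r * gammaMeasure r 1 (Iic T)) +
          ENNReal.ofReal r * upperIncompleteGamma r T := by
        rw [← ofReal_Gamma_mul_gammaMeasure_Ioi hr hT]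
        ring
    _ ≤ _ := by
        rw [setLIntegral_upperIncompleteGamma_gammaPotential hr]
        gcongr

lemma tendsto_ofReal_Gamma_add_one :
    Tendsto (fun r : ℝ => ENNReal.ofReal (Real.Gamma (r + 1))) (𝓝[>] 0) (𝓝 1) := by
  have hΓ : ContinuousAt Real.Gamma (0 + 1) :=
    Real.differentiableOn_Gamma_Ioi.continuousOn.continuousAt (Ioi_mem_nhds (by norm_num))
  have h : Tendsto (fun r : ℝ => Real.Gamma (r + 1)) (𝓝[>] 0) (𝓝 (Real.Gamma (0 + 1))) :=
    hΓ.tendsto.comp (((continuous_add_const 1).tendsto 0).mono_left nhdsWithin_le_nhds)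
  simpa using ENNReal.tendsto_ofReal h

lemma setLIntegral_upperIncompleteGamma_zero_gammaPotential_le_one (T : ℝ) :
    ∫⁻ t in Iic T, upperIncompleteGamma 0 (T - t) ∂gammaPotential 1 ≤ 1 := by
  calc ∫⁻ t in Iic T, upperIncompleteGamma 0 (T - t) ∂gammaPotential 1
      ≤ ∫⁻ t in Iic T, liminf (fun r => upperIncompleteGamma r (T - t)) (𝓝[>] 0)
          ∂gammaPotential 1 :=
        setLIntegral_mono' measurableSet_Iic fun t ht =>
          upperIncompleteGamma_le_liminf (sub_nonneg.2 ht) 0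
    _ ≤ liminf (fun r => ∫⁻ t in Iic T, upperIncompleteGamma r (T - t) ∂gammaPotential 1)
          (𝓝[>] 0) :=
        lintegral_liminf_le fun r => measurable_upperIncompleteGamma_const_sub r T
    _ ≤ liminf (fun r => ENNReal.ofReal (Real.Gamma (r + 1))) (𝓝[>] 0) := by
        refine liminf_le_liminf ?_
        filter_upwards [self_mem_nhdsWithin] with r hr
        exact setLIntegral_upperIncompleteGamma_gammaPotential_le hr T
    _ = 1 := tendsto_ofReal_Gamma_add_one.liminf_eq

lemma one_le_setLIntegral_upperIncompleteGamma_zero_gammaPotential {T : ℝ} (hT : 0 < T) :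
    1 ≤ ∫⁻ t in Iic T, upperIncompleteGamma 0 (T - t) ∂gammaPotential 1 := by
  set I := ∫⁻ t in Iic T, upperIncompleteGamma 0 (T - t) ∂gammaPotential 1
  set C := gammaPotential 1 (Iic T) + (upperIncompleteGamma 0 T + 1)
  have hC : C ≠ ∞ := ENNReal.add_ne_top.2 ⟨(gammaPotential_Iic_lt_top one_pos T).ne,
    ENNReal.add_ne_top.2 ⟨(upperIncompleteGamma_zero_lt_top hT).ne, ENNReal.one_ne_top⟩⟩
  have hbound (r : ℝ) (hr : r ∈ Ioc 0 1) :
      ENNReal.ofReal (Real.Gamma (r + 1)) ≤ I + ENNReal.ofReal r * C := by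
    have hle {x : ℝ} (hx : 0 ≤ x) := upperIncompleteGamma_le_zero_add hr.1.le hr.2 hx
    calc ENNReal.ofReal (Real.Gamma (r + 1))
        ≤ (∫⁻ t in Iic T, upperIncompleteGamma r (T - t) ∂gammaPotential 1) +
            ENNReal.ofReal r * upperIncompleteGamma r T :=
          ofReal_Gamma_add_one_le_setLIntegral_add hr.1 hT.le
      _ ≤ (∫⁻ t in Iic T, (upperIncompleteGamma 0 (T - t) + ENNReal.ofReal r)
              ∂gammaPotential 1) +
            ENNReal.ofReal r * (upperIncompleteGamma 0 T + 1) := by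
          gcongr ?_ + ENNReal.ofReal r * ?_
          · exact setLIntegral_mono' measurableSet_Iic fun t ht => hle (sub_nonneg.2 ht)
          · exact (hle hT.le).trans (by gcongr; exact ENNReal.ofReal_le_one.2 hr.2)
      _ = I + ENNReal.ofReal r * C := by
          rw [lintegral_add_left (measurable_upperIncompleteGamma_const_sub 0 T),
            setLIntegral_const, add_assoc, ← mul_add]
  have hlim : Tendsto (fun r : ℝ => I + ENNReal.ofReal r * C) (𝓝[>] 0) (𝓝 I) := by
    have hr : Tendsto ENNReal.ofReal (𝓝[>] 0) (𝓝 0) := by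
      simpa using (ENNReal.continuous_ofReal.tendsto 0).mono_left nhdsWithin_le_nhds
    simpa using tendsto_const_nhds.add (ENNReal.Tendsto.mul_const hr (Or.inr hC))
  refine le_of_tendsto_of_tendsto tendsto_ofReal_Gamma_add_one hlim ?_
  filter_upwards [Ioc_mem_nhdsGT one_pos] with r hr using hbound r hr

theorem setLIntegral_upperIncompleteGamma_zero_gammaPotential {T : ℝ} (hT : 0 < T) :
    ∫⁻ t in Iic T, upperIncompleteGamma 0 (T - t) ∂gammaPotential 1 = 1 :=
  le_antisymm (setLIntegral_upperIncompleteGamma_zero_gammaPotential_le_one T)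
    (one_le_setLIntegral_upperIncompleteGamma_zero_gammaPotential hT)

lemma E1_eq_toReal_upperIncompleteGamma_zero {x : ℝ} (hx : 0 ≤ x) :
    E1 x = (upperIncompleteGamma 0 x).toReal := by
  rw [E1, upperIncompleteGamma, integral_eq_lintegral_of_nonneg_ae]
  · simp only [zero_sub, Real.rpow_neg_one, div_eq_inv_mul]
  · filter_upwards [ae_restrict_mem measurableSet_Ioi] with v hv
    exact div_nonneg (Real.exp_pos _).le (hx.trans (mem_Ioi.1 hv).le)
  · exact Measurable.aestronglyMeasurable (by fun_prop)

lemma Ffun_eq_toReal_gammaPotentialDensity {t : ℝ} (ht : 0 < t) :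
    Ffun t = (gammaPotentialDensity 1 t).toReal := by
  have hΓ := measurable_realGamma
  have hpdf (a : ℝ) : gammaPDF a 1 t =
      ENNReal.ofReal (t ^ (a - 1) / Real.Gamma a * Real.exp (-t)) := by
    rw [gammaPDF_of_nonneg ht.le, Real.one_rpow, one_mul, one_div_mul_eq_div]
  rw [Ffun, gammaPotentialDensity, ← integral_mul_const, integral_eq_lintegral_of_nonneg_ae]
  · simp only [hpdf]
  · filter_upwards [ae_restrict_mem measurableSet_Ioi] with a ha
    have := Real.Gamma_pos_of_pos ha
    positivity
  · exact Measurable.aestronglyMeasurable (by fun_prop)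

lemma setLIntegral_Ioc_gammaPotentialDensity_mul {b T : ℝ} {f : ℝ → ℝ≥0∞} (hf : Measurable f) :
    ∫⁻ t in Ioc 0 T, gammaPotentialDensity b t * f t = ∫⁻ t in Iic T, f t ∂gammaPotential b := by
  have hae : (Iic T : Set ℝ) =ᵐ[gammaPotential b] Ioc 0 T := by
    rw [← Ioi_inter_Iic, inter_comm, ← compl_Iic, ← sdiff_eq]
    exact (sdiff_null_ae_eq_self (gammaPotential_Iic_zero b)).symm
  rw [setLIntegral_congr hae, gammaPotential,
    setLIntegral_withDensity_eq_setLIntegral_mul _ (measurable_gammaPotentialDensity b) hf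
      measurableSet_Ioc]
  simp only [Pi.mul_apply]

theorem integral_E1_mul_Ffun {T : ℝ} (hT : 0 < T) : ∫ t in 0..T, E1 (T - t) * Ffun t = 1 := by
  have hmeas := measurable_upperIncompleteGamma_const_sub 0 T
  have hprod : Measurable fun t => gammaPotentialDensity 1 t * upperIncompleteGamma 0 (T - t) :=
    (measurable_gammaPotentialDensity 1).mul hmeas
  have hone :
      ∫⁻ t in Ioc 0 T, gammaPotentialDensity 1 t * upperIncompleteGamma 0 (T - t) = 1 := by
    rw [setLIntegral_Ioc_gammaPotentialDensity_mul hmeas,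
      setLIntegral_upperIncompleteGamma_zero_gammaPotential hT]
  have hfactor (t : ℝ) (ht : t ∈ Ioc 0 T) : E1 (T - t) * Ffun t =
      (gammaPotentialDensity 1 t * upperIncompleteGamma 0 (T - t)).toReal := by
    rw [E1_eq_toReal_upperIncompleteGamma_zero (sub_nonneg.2 ht.2),
      Ffun_eq_toReal_gammaPotentialDensity ht.1, ENNReal.toReal_mul, mul_comm]
  rw [intervalIntegral.integral_of_le hT.le, setIntegral_congr_fun measurableSet_Ioc hfactor,
    integral_toReal hprod.aemeasurable (ae_lt_top hprod (hone.trans_ne ENNReal.one_ne_top)), hone,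
    ENNReal.toReal_one]

lemma deltaK_comm_of_difference_kernels (f g : ℝ → ℝ) (x y : ℝ) :
    deltaK (fun x y => f (x - y)) (fun x y => g (x - y)) x y =
      deltaK (fun x y => g (x - y)) (fun x y => f (x - y)) x y := by
  have h := intervalIntegral.integral_comp_sub_left (a := y) (b := x)
    (fun z => g (x - z) * f (z - y)) (x + y)
  rw [add_sub_cancel_left, add_sub_cancel_right] at h
  rw [deltaK, deltaK, ← h]
  refine intervalIntegral.integral_congr fun z _ => ?_
  ring_nf

lemma deltaK_scaled_difference_kernels (f g : ℝ → ℝ) (α x y : ℝ) :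
    deltaK (fun x y => 1 / α * f ((x - y) / α)) (fun x y => g ((x - y) / α)) x y =
      ∫ t in 0..(x - y) / α, f ((x - y) / α - t) * g t := by
  have h := intervalIntegral.inv_smul_integral_comp_div_sub (a := y) (b := x) (c := α)
    (fun t => f ((x - y) / α - t) * g t) (y / α)
  rw [sub_self, ← sub_div] at h
  rw [deltaK, ← h, smul_eq_mul, ← intervalIntegral.integral_const_mul]
  refine intervalIntegral.integral_congr fun z _ => ?_
  ring_nf

theorem stmt15_general :
    (∀ T : ℝ, 0 < T → (∫ t in (0:ℝ)..T, E1 (T - t) * Ffun t) = 1) ∧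
    (∀ α : ℝ, 0 < α → ∀ x y : ℝ, y < x →
      deltaK (fun x y => Ffun ((x - y) / α)) (fun x y => (1 / α) * E1 ((x - y) / α)) x y = 1 ∧
      deltaK (fun x y => (1 / α) * E1 ((x - y) / α)) (fun x y => Ffun ((x - y) / α)) x y = 1) := by
  refine ⟨fun T hT => integral_E1_mul_Ffun hT, fun α hα x y hxy => ?_⟩
  have hE1F : deltaK (fun x y => 1 / α * E1 ((x - y) / α))
      (fun x y => Ffun ((x - y) / α)) x y = 1 := by
    rw [deltaK_scaled_difference_kernels E1 Ffun,
      integral_E1_mul_Ffun (div_pos (sub_pos.2 hxy) hα)]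
  refine ⟨?_, hE1F⟩
  rw [deltaK_comm_of_difference_kernels (fun u => Ffun (u / α)) (fun u => 1 / α * E1 (u / α)), hE1F]

end

/-- the Sonine-type identity `∫_0^T E₁(T−t) F(t) dt = 1` for every `T > 0`;
consequently, for every `α > 0`, the kernels `k_α(x,y) = F((x−y)/α)` and
`k'_α(x,y) = (1/α) E₁((x−y)/α)` on `Ω = {(x,y) ∈ [0,1]² : x > y}` are conjugate (weight
`ω ≡ 1`): `δ_{k_α,k'_α} = δ_{k'_α,k_α} ≡ 1` on `Ω`. -/
theorem stmt15 :
    (∀ T : ℝ, 0 < T → (∫ t in (0:ℝ)..T, E1 (T - t) * Ffun t) = 1) ∧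
    (∀ α : ℝ, 0 < α → ∀ x y : ℝ, 0 ≤ y → y < x → x ≤ 1 →
      deltaK (fun x y => Ffun ((x - y) / α)) (fun x y => (1 / α) * E1 ((x - y) / α)) x y = 1 ∧
      deltaK (fun x y => (1 / α) * E1 ((x - y) / α)) (fun x y => Ffun ((x - y) / α)) x y = 1) := by
  exact ⟨stmt15_general.1, fun α hα x y _ hxy _ => stmt15_general.2 α hα x y hxy⟩

end
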